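/- There exist a constant c > 0 and λ₀ ∈ (0,1] such that for all λ ∈ (0,λ₀) and all (x,p) ∈ ℝ², c ≤ V_λ(x,p). -/

import Mathlib

open MeasureTheory Real

/-- Standard Gaussian density. -/
noncomputable def gauss (q : ℝ) : ℝ := (Real.sqrt (2 * Real.pi))⁻¹ * Real.exp (-q ^ 2 / 2)

/-- The constant η = (1/16)·√(π/2). -/
noncomputable def eta : ℝ := (1 / 16) * Real.sqrt (Real.pi / 2)

/-- Collision jump-rate kernel. -/
noncomputable def Jker (lam p p' : ℝ) : ℝ :=
  (eta * (1 + lam) / 2) * |p' - p| * gauss (((1 - lam) / 2) * p' - ((1 + lam) / 2) * p)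

/-- Escape rate. -/
noncomputable def Esc (lam p : ℝ) : ℝ := ∫ p' : ℝ, Jker lam p p'

/-- The Hamiltonian H(x,p) = p²/2 + V(x). -/
noncomputable def Ham (V : ℝ → ℝ) (x p : ℝ) : ℝ := p ^ 2 / 2 + V x

/-- A_λ(x,p): expected jump of √2·H^{1/2} under the kernel. -/
noncomputable def Afun (V : ℝ → ℝ) (lam x p : ℝ) : ℝ :=
  ∫ p' : ℝ,
    (Real.sqrt 2 * Real.sqrt (Ham V x p') - Real.sqrt 2 * Real.sqrt (Ham V x p)) *
      Jker lam p p'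

/-- V_λ(x,p): the centered second jump moment of √2·H^{1/2}. -/
noncomputable def Vfun (V : ℝ → ℝ) (lam x p : ℝ) : ℝ :=
  ∫ p' : ℝ,
    (Real.sqrt 2 * Real.sqrt (Ham V x p') - Real.sqrt 2 * Real.sqrt (Ham V x p) -
        Afun V lam x p / Esc lam p) ^ 2 * Jker lam p p'

/-!
As a function of `p'`, the kernel `J_λ(p, p')` is a multiple of `|p' - p|` times a Gaussian density
of standard deviation `2 / (1 - λ) ≥ 2` whose mean, for `p ≥ 0`, is at least `p`. Hence for `p ≥ 0`
the kernel is bounded below, uniformly in `λ` and `p`, on the windows from `1` to `2` and from `3`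
to `4` standard deviations above the mean. Since `V` is bounded, the values of `√2 · H^{1/2}` on
these two windows are separated by a uniform gap, so every constant, and in particular the centering
in `V_λ`, is far from them on at least one of the windows. The case `p ≤ 0` follows by reflection.
-/

open ProbabilityTheory Set
open scoped NNReal ENNReal

section SecondMoment

variable {α : Type*} [MeasurableSpace α] {μ : Measure α}

lemma mul_measureReal_le_integral_of_forall_mem {F : α → ℝ} {U : Set α} {ε : ℝ}
    (hF_nonneg : ∀ y, 0 ≤ F y) (hF : Integrable F μ) (hε : 0 < ε) (hU : ∀ y ∈ U, ε ≤ F y) :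
    ε * μ.real U ≤ ∫ y, F y ∂μ :=
  calc ε * μ.real U ≤ ε * μ.real {y | ε ≤ F y} := by
        gcongr
        · exact (hF.measure_ge_lt_top hε).ne
        · exact hU
    _ ≤ ∫ y, F y ∂μ := mul_meas_ge_le_integral_of_nonneg (.of_forall hF_nonneg) hF ε

lemma le_integral_sq_sub_mul_of_separated {f w : α → ℝ} {S T : Set α} {a b d m r : ℝ}
    (hw : ∀ y, 0 ≤ w y) (hint : Integrable (fun y => (f y - a) ^ 2 * w y) μ)
    (hd : 0 < d) (hm : 0 < m) (hfS : ∀ y ∈ S, f y ≤ b) (hfT : ∀ y ∈ T, b + 2 * d ≤ f y)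
    (hwS : ∀ y ∈ S, m ≤ w y) (hwT : ∀ y ∈ T, m ≤ w y) (hS : r ≤ μ.real S) (hT : r ≤ μ.real T) :
    d ^ 2 * m * r ≤ ∫ y, (f y - a) ^ 2 * w y ∂μ := by
  have bound_of_far {U : Set α} (hU : r ≤ μ.real U) (hwU : ∀ y ∈ U, m ≤ w y)
      (hfU : ∀ y ∈ U, d ≤ |f y - a|) : d ^ 2 * m * r ≤ ∫ y, (f y - a) ^ 2 * w y ∂μ :=
    calc d ^ 2 * m * r ≤ d ^ 2 * m * μ.real U := by gcongr
      _ ≤ ∫ y, (f y - a) ^ 2 * w y ∂μ := by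
        refine mul_measureReal_le_integral_of_forall_mem
          (fun y => mul_nonneg (sq_nonneg _) (hw y)) hint (by positivity) fun y hy => ?_
        rw [← sq_abs (f y - a)]
        gcongr
        · exact hfU y hy
        · exact hwU y hy
  rcases le_total a (b + d) with ha | ha
  · exact bound_of_far hT hwT fun y hy => le_abs.2 (.inl (by linarith [hfT y hy]))
  · exact bound_of_far hS hwS fun y hy => le_abs.2 (.inr (by linarith [hfS y hy]))

end SecondMoment

section EnergyRadius

/-- The value of `√2 · H^{1/2}` at momentum `q`, where `v` is the value of the potential; it is the
Euclidean norm of `(q, √(2 v))`. -/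
noncomputable def energyRadius (v q : ℝ) : ℝ := √(q ^ 2 + 2 * v)

lemma sqrt_two_mul_sqrt_Ham (V : ℝ → ℝ) (x q : ℝ) : √2 * √(Ham V x q) = energyRadius (V x) q := by
  rw [← Real.sqrt_mul zero_le_two, Ham, energyRadius]
  congr 1
  ring

lemma energyRadius_neg (v q : ℝ) : energyRadius v (-q) = energyRadius v q := by
  simp only [energyRadius, neg_sq]

lemma energyRadius_nonneg (v q : ℝ) : 0 ≤ energyRadius v q :=
  Real.sqrt_nonneg _

lemma continuous_energyRadius (v : ℝ) : Continuous (energyRadius v) := by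
  unfold energyRadius
  fun_prop

lemma energyRadius_le_energyRadius (v : ℝ) {s t : ℝ} (hs : 0 ≤ s) (hst : s ≤ t) :
    energyRadius v s ≤ energyRadius v t := by
  unfold energyRadius
  gcongr

variable {v : ℝ}

lemma energyRadius_le_abs_add_sqrt (hv : 0 ≤ v) (q : ℝ) :
    energyRadius v q ≤ |q| + √(2 * v) := by
  refine Real.sqrt_le_iff.2 ⟨by positivity, ?_⟩
  have hsq : √(2 * v) ^ 2 = 2 * v := Real.sq_sqrt (by positivity)
  have hcross : 0 ≤ |q| * √(2 * v) := by positivity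
  nlinarith [sq_abs q]

lemma div_le_energyRadius_sub (hv : 0 ≤ v) {s t : ℝ} (hs : 0 ≤ s) (hst : s ≤ t)
    (hadd : 2 ≤ s + t) :
    (t - s) / (1 + √(2 * v)) ≤ energyRadius v t - energyRadius v s := by
  have hr : 0 ≤ √(2 * v) := Real.sqrt_nonneg _
  have hmono := energyRadius_le_energyRadius v hs hst
  have hsum : energyRadius v t + energyRadius v s ≤ (t + s) * (1 + √(2 * v)) := by
    have hs_le := energyRadius_le_abs_add_sqrt hv s
    have ht_le := energyRadius_le_abs_add_sqrt hv t
    rw [abs_of_nonneg hs] at hs_le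
    rw [abs_of_nonneg (hs.trans hst)] at ht_le
    nlinarith
  have hsq (q : ℝ) : energyRadius v q ^ 2 = q ^ 2 + 2 * v := Real.sq_sqrt (by positivity)
  rw [div_le_iff₀ (by positivity)]
  refine le_of_mul_le_mul_right ?_ (show 0 < t + s by linarith)
  calc (t - s) * (t + s)
      = (energyRadius v t - energyRadius v s) * (energyRadius v t + energyRadius v s) := by
        linear_combination hsq s - hsq t
    _ ≤ (energyRadius v t - energyRadius v s) * ((t + s) * (1 + √(2 * v))) :=
        mul_le_mul_of_nonneg_left hsum (sub_nonneg.2 hmono)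
    _ = (energyRadius v t - energyRadius v s) * (1 + √(2 * v)) * (t + s) := by ring

lemma energyRadius_add_le_energyRadius (hv : 0 ≤ v) {s t : ℝ} (hs : 0 ≤ s) (hst : 2 ≤ t - s) :
    energyRadius v s + 2 * (1 / (1 + √(2 * v))) ≤ energyRadius v t := by
  have hslope : 2 / (1 + √(2 * v)) ≤ energyRadius v t - energyRadius v s :=
    calc 2 / (1 + √(2 * v)) ≤ (t - s) / (1 + √(2 * v)) := by gcongr
      _ ≤ energyRadius v t - energyRadius v s :=
        div_le_energyRadius_sub hv hs (by linarith) (by linarith)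
  rw [mul_one_div]
  linarith

lemma memLp_energyRadius_gaussianReal (hv : 0 ≤ v) (m : ℝ) (s : ℝ≥0) {p : ℝ≥0∞}
    (hp : p ≠ ∞) : MemLp (energyRadius v) p (gaussianReal m s) := by
  have hdom : MemLp (fun q : ℝ => |q| + √(2 * v)) p (gaussianReal m s) :=
    (memLp_id_gaussianReal' p hp).abs.add (memLp_const _)
  refine hdom.mono' (continuous_energyRadius v).aestronglyMeasurable (.of_forall fun q => ?_)
  rw [Real.norm_of_nonneg (energyRadius_nonneg v q)]
  exact energyRadius_le_abs_add_sqrt hv q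

end EnergyRadius

section Gaussian

lemma gauss_pos (q : ℝ) : 0 < gauss q := by
  unfold gauss
  positivity

lemma gauss_neg (q : ℝ) : gauss (-q) = gauss q := by
  simp only [gauss, neg_sq]

lemma gauss_le_gauss {q r : ℝ} (hq : 0 ≤ q) (hqr : q ≤ r) : gauss r ≤ gauss q := by
  unfold gauss
  gcongr

lemma gauss_sub_div {σ : ℝ} (hσ : σ ≠ 0) (m y : ℝ) :
    gauss ((y - m) / σ) = |σ| * gaussianPDFReal m (σ ^ 2).toNNReal y := by
  have hexp : -((y - m) / σ) ^ 2 / 2 = -(y - m) ^ 2 / (2 * σ ^ 2) := by field_simp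
  rw [gauss, gaussianPDFReal, Real.coe_toNNReal _ (sq_nonneg σ), hexp,
    Real.sqrt_mul (by positivity) (σ ^ 2), Real.sqrt_sq_eq_abs]
  field_simp

lemma integrable_mul_gaussianPDFReal {f : ℝ → ℝ} {m : ℝ} {s : ℝ≥0} (hs : s ≠ 0)
    (hf : Integrable f (gaussianReal m s)) :
    Integrable (fun y => f y * gaussianPDFReal m s y) := by
  rw [gaussianReal_of_var_ne_zero m hs, integrable_withDensity_iff (measurable_gaussianPDF m s)
    (.of_forall fun _ => ENNReal.ofReal_lt_top)] at hf
  simpa only [toReal_gaussianPDF] using hf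

end Gaussian

section Kernel

lemma eta_pos : 0 < eta := by
  unfold eta
  positivity

/-- The mean of the Gaussian factor of the collision kernel `Jker lam p`. -/
noncomputable def collisionMean (lam p : ℝ) : ℝ := (1 + lam) / (1 - lam) * p

/-- The standard deviation of the Gaussian factor of the collision kernel `Jker lam p`. -/
noncomputable def collisionSD (lam : ℝ) : ℝ := 2 / (1 - lam)

/-- The point `k` standard deviations above the mean of the Gaussian factor of `Jker lam p`. -/
noncomputable def collisionPoint (lam p k : ℝ) : ℝ := collisionMean lam p + k * collisionSD lam

lemma Jker_neg_neg (lam p p' : ℝ) : Jker lam (-p) (-p') = Jker lam p p' := by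
  have habs : |-p' - -p| = |p' - p| := by rw [neg_sub_neg, abs_sub_comm]
  have harg : (1 - lam) / 2 * -p' - (1 + lam) / 2 * -p =
      -((1 - lam) / 2 * p' - (1 + lam) / 2 * p) := by ring
  rw [Jker, Jker, habs, harg, gauss_neg]

variable {lam p : ℝ}

lemma Jker_nonneg (hlam : -1 ≤ lam) (p p' : ℝ) : 0 ≤ Jker lam p p' := by
  have hfactor : 0 ≤ eta * (1 + lam) / 2 :=
    div_nonneg (mul_nonneg eta_pos.le (by linarith)) zero_le_two
  exact mul_nonneg (mul_nonneg hfactor (abs_nonneg _)) (gauss_pos _).le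

lemma Jker_eq_mul_gauss (hlam : lam ≠ 1) (p p' : ℝ) :
    Jker lam p p' = eta * (1 + lam) / 2 * |p' - p| *
      gauss ((p' - collisionMean lam p) / collisionSD lam) := by
  have hlam' : 1 - lam ≠ 0 := sub_ne_zero.2 hlam.symm
  rw [Jker, collisionMean, collisionSD]
  congr 2
  field_simp

lemma two_le_collisionSD (hlam₀ : 0 ≤ lam) (hlam₁ : lam < 1) : 2 ≤ collisionSD lam := by
  rw [collisionSD, le_div_iff₀ (by linarith)]
  linarith

lemma le_collisionMean (hlam₀ : 0 ≤ lam) (hlam₁ : lam < 1) (hp : 0 ≤ p) :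
    p ≤ collisionMean lam p := by
  refine le_mul_of_one_le_left hp ?_
  rw [one_le_div (by linarith)]
  linarith

lemma collisionPoint_nonneg (hlam₀ : 0 ≤ lam) (hlam₁ : lam < 1) (hp : 0 ≤ p) {k : ℝ} (hk : 0 ≤ k) :
    0 ≤ collisionPoint lam p k :=
  add_nonneg (hp.trans (le_collisionMean hlam₀ hlam₁ hp))
    (mul_nonneg hk (two_pos.le.trans (two_le_collisionSD hlam₀ hlam₁)))

lemma two_le_collisionPoint_sub (hlam₀ : 0 ≤ lam) (hlam₁ : lam < 1) (p : ℝ) {k l : ℝ}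
    (hkl : k + 1 ≤ l) : 2 ≤ collisionPoint lam p l - collisionPoint lam p k := by
  have hsd := two_le_collisionSD hlam₀ hlam₁
  calc 2 ≤ 1 * collisionSD lam := by rwa [one_mul]
    _ ≤ (l - k) * collisionSD lam := by gcongr; linarith
    _ = collisionPoint lam p l - collisionPoint lam p k := by unfold collisionPoint; ring

lemma integrable_mul_Jker {f : ℝ → ℝ} (hlam : lam ≠ 1)
    (hf : MemLp f 2 (gaussianReal (collisionMean lam p) (collisionSD lam ^ 2).toNNReal)) :
    Integrable (fun y => f y * Jker lam p y) := by
  have hsd : collisionSD lam ≠ 0 := div_ne_zero two_ne_zero (sub_ne_zero.2 hlam.symm)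
  have habs : MemLp (fun y => |y - p|) 2
      (gaussianReal (collisionMean lam p) (collisionSD lam ^ 2).toNNReal) :=
    ((memLp_id_gaussianReal 2).sub (memLp_const p)).abs
  have hint := (integrable_mul_gaussianPDFReal (by positivity)
    (hf.integrable_mul habs)).const_mul (eta * (1 + lam) / 2 * |collisionSD lam|)
  refine hint.congr (.of_forall fun y => ?_)
  simp only [Jker_eq_mul_gauss hlam, gauss_sub_div hsd, Pi.mul_apply]
  ring

lemma integrable_sq_energyRadius_sub_mul_Jker {v : ℝ} (hv : 0 ≤ v) (hlam : lam ≠ 1) (p a : ℝ) :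
    Integrable (fun y => (energyRadius v y - a) ^ 2 * Jker lam p y) := by
  have hmem : MemLp (fun y => energyRadius v y - a) 4
      (gaussianReal (collisionMean lam p) (collisionSD lam ^ 2).toNNReal) :=
    (memLp_energyRadius_gaussianReal hv _ _ (by norm_num)).sub (memLp_const a)
  have : ENNReal.HolderTriple 4 4 2 := ⟨by
    rw [← ENNReal.toReal_eq_toReal_iff' (by simp) (by simp)]
    norm_num [ENNReal.toReal_add]⟩
  have hsq := hmem.mul' hmem (r := 2)
  simp only [← sq] at hsq
  exact integrable_mul_Jker hlam hsq

lemma mul_gauss_le_Jker {k l y : ℝ} (hlam₀ : 0 ≤ lam) (hlam₁ : lam < 1) (hp : 0 ≤ p) (hk : 0 ≤ k)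
    (hy : y ∈ Icc (collisionPoint lam p k) (collisionPoint lam p l)) :
    eta * k * gauss l ≤ Jker lam p y := by
  obtain ⟨hky, hyl⟩ := hy
  rw [collisionPoint] at hky hyl
  have hsd := two_le_collisionSD hlam₀ hlam₁
  have hsd_pos : 0 < collisionSD lam := two_pos.trans_le hsd
  have hdist : k * 2 ≤ |y - p| :=
    calc k * 2 ≤ k * collisionSD lam := by gcongr
      _ ≤ y - p := by linarith [hky, le_collisionMean hlam₀ hlam₁ hp]
      _ ≤ |y - p| := le_abs_self _
  have hgauss : gauss l ≤ gauss ((y - collisionMean lam p) / collisionSD lam) := by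
    refine gauss_le_gauss (div_nonneg ?_ hsd_pos.le) ((div_le_iff₀ hsd_pos).2 ?_)
    · linarith [hky, mul_nonneg hk hsd_pos.le]
    · linarith
  have heta := eta_pos
  have hgauss_pos := gauss_pos l
  rw [Jker_eq_mul_gauss hlam₁.ne]
  calc eta * k * gauss l = eta * (1 + 0) / 2 * (k * 2) * gauss l := by ring
    _ ≤ eta * (1 + lam) / 2 * |y - p| *
        gauss ((y - collisionMean lam p) / collisionSD lam) := by gcongr

end Kernel

section Variance

variable {v lam p : ℝ}

lemma le_integral_sq_energyRadius_sub_mul_Jker_of_nonneg (hv : 0 ≤ v) (hlam₀ : 0 ≤ lam)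
    (hlam₁ : lam < 1) (hp : 0 ≤ p) (a : ℝ) :
    (1 / (1 + √(2 * v))) ^ 2 * (eta * gauss 4) * 2 ≤
      ∫ y, (energyRadius v y - a) ^ 2 * Jker lam p y := by
  set P : ℝ → ℝ := collisionPoint lam p
  have hstep {k l : ℝ} (hkl : k + 1 ≤ l) : 2 ≤ P l - P k :=
    two_le_collisionPoint_sub hlam₀ hlam₁ p hkl
  have hP_nonneg {k : ℝ} (hk : 0 ≤ k) : 0 ≤ P k := collisionPoint_nonneg hlam₀ hlam₁ hp hk
  have hJ {y : ℝ} (hy : y ∈ Icc (P 1) (P 4)) : eta * gauss 4 ≤ Jker lam p y := by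
    simpa only [mul_one] using mul_gauss_le_Jker hlam₀ hlam₁ hp zero_le_one hy
  have h12 : 2 ≤ P 2 - P 1 := hstep (by norm_num)
  have h23 : 2 ≤ P 3 - P 2 := hstep (by norm_num)
  have h34 : 2 ≤ P 4 - P 3 := hstep (by norm_num)
  refine le_integral_sq_sub_mul_of_separated (S := Icc (P 1) (P 2)) (T := Icc (P 3) (P 4))
    (b := energyRadius v (P 2)) (Jker_nonneg (by linarith) p)
    (integrable_sq_energyRadius_sub_mul_Jker hv hlam₁.ne p a) (by positivity)
    (mul_pos eta_pos (gauss_pos 4)) (fun y hy => ?_) (fun y hy => ?_)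
    (fun y hy => hJ (Icc_subset_Icc_right (by linarith) hy))
    (fun y hy => hJ (Icc_subset_Icc_left (by linarith) hy)) ?_ ?_
  · exact energyRadius_le_energyRadius v ((hP_nonneg zero_le_one).trans hy.1) hy.2
  · exact (energyRadius_add_le_energyRadius hv (hP_nonneg zero_le_two) h23).trans
      (energyRadius_le_energyRadius v (hP_nonneg zero_le_three) hy.1)
  · rwa [Real.volume_real_Icc_of_le (by linarith)]
  · rwa [Real.volume_real_Icc_of_le (by linarith)]

lemma le_integral_sq_energyRadius_sub_mul_Jker (hv : 0 ≤ v) (hlam₀ : 0 ≤ lam) (hlam₁ : lam < 1)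
    (p a : ℝ) :
    (1 / (1 + √(2 * v))) ^ 2 * (eta * gauss 4) * 2 ≤
      ∫ y, (energyRadius v y - a) ^ 2 * Jker lam p y := by
  rcases le_total 0 p with hp | hp
  · exact le_integral_sq_energyRadius_sub_mul_Jker_of_nonneg hv hlam₀ hlam₁ hp a
  · have h := le_integral_sq_energyRadius_sub_mul_Jker_of_nonneg hv hlam₀ hlam₁
      (neg_nonneg.2 hp) a
    rw [← integral_neg_eq_self] at h
    simpa only [Jker_neg_neg, energyRadius_neg] using h

lemma Vfun_eq_integral_sq_energyRadius_sub (V : ℝ → ℝ) (lam x p : ℝ) :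
    Vfun V lam x p = ∫ y, (energyRadius (V x) y -
      (energyRadius (V x) p + Afun V lam x p / Esc lam p)) ^ 2 * Jker lam p y := by
  simp only [Vfun, sqrt_two_mul_sqrt_Ham, sub_sub]

end Variance

theorem stmt_13_general (V : ℝ → ℝ) (hVbdd : BddAbove (range V)) (hVpos : ∀ x, 0 ≤ V x) :
    ∃ c : ℝ, 0 < c ∧ ∀ lam ∈ Ico (0 : ℝ) 1, ∀ x p : ℝ, c ≤ Vfun V lam x p := by
  obtain ⟨B, hB⟩ := hVbdd
  have heta := eta_pos
  have hgauss := gauss_pos 4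
  refine ⟨(1 / (1 + √(2 * B))) ^ 2 * (eta * gauss 4) * 2, by positivity, fun lam hlam x p => ?_⟩
  have hVB : V x ≤ B := hB (mem_range_self x)
  rw [Vfun_eq_integral_sq_energyRadius_sub]
  calc (1 / (1 + √(2 * B))) ^ 2 * (eta * gauss 4) * 2
      ≤ (1 / (1 + √(2 * V x))) ^ 2 * (eta * gauss 4) * 2 := by gcongr
    _ ≤ _ := le_integral_sq_energyRadius_sub_mul_Jker (hVpos x) hlam.1 hlam.2 p _

theorem stmt_13 (V : ℝ → ℝ) (hV : ContDiff ℝ 1 V) (hVpos : ∀ x, 0 ≤ V x)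
    (hVper : Function.Periodic V 1) :
    ∃ c : ℝ, 0 < c ∧ ∃ lam₀ ∈ Set.Ioc (0 : ℝ) 1,
      ∀ lam : ℝ, 0 < lam → lam < lam₀ → ∀ x p : ℝ,
        c ≤ Vfun V lam x p := by
  obtain ⟨c, hc, h⟩ := stmt_13_general V
    (hVper.compact_of_continuous one_ne_zero hV.continuous).bddAbove hVpos
  exact ⟨c, hc, 1, ⟨one_pos, le_rfl⟩, fun lam hlam₀ hlam₁ => h lam ⟨hlam₀.le, hlam₁⟩⟩
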